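/- arXiv:1511.06099 — 2 statements merged into one kernel-verified Lean document; each statement's English description precedes it below -/
import Mathlib

section
/- Let s > 1 be a real number and let G = (V, E) be a finite simple undirected graph with |V| = n vertices and |E| = m ≤ s·n edges. Suppose the edges of G are oriented so that every directed edge (u, v) satisfies: the out-degree of u is less than 2s, or the out-degree of v is at least 2s − 1 (out-degrees taken in the full orientation). Let E_r be the set of directed edges (u, v) whose tail satisfies out-degree of u at least 2s. Then the number of vertices incident to at least one edge of E_r is at most s·n/(2s − 1) = n/(2 − 1/s). -/
open scoped Classical

/-- Out-degree of `u` in the orientation `D`. -/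
noncomputable def outdeg {V : Type} [Fintype V] (D : V → V → Bool) (u : V) : ℕ :=
  (Finset.univ.filter (fun v => D u v = true)).card

/-- The set of directed edges whose tail has out-degree at least `2s`. -/
noncomputable def Er {V : Type} [Fintype V] (D : V → V → Bool) (s : ℝ) :
    Finset (V × V) :=
  Finset.univ.filter (fun p : V × V => D p.1 p.2 = true ∧ 2 * s ≤ (outdeg D p.1 : ℝ))

/-!
The tail of an edge of `Er D s` has out-degree at least `2s`, which forces its head to have
out-degree at least `2s - 1`. As the out-degrees add up to `m ≤ s n`, at most `s n / (2s - 1)`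
vertices can have such a large out-degree.
-/

section Digraph

variable {V : Type} [Fintype V] {D : V → V → Bool} {s t : ℝ}

theorem sum_outdeg_eq_card_edges (D : V → V → Bool) :
    ∑ u, outdeg D u = (Finset.univ.filter (fun p : V × V => D p.1 p.2 = true)).card := by
  simp only [outdeg, Finset.card_filter, Fintype.sum_prod_type]

theorem card_mul_le_card_edges_of_le_outdeg {S : Finset V}
    (hS : ∀ v ∈ S, t ≤ (outdeg D v : ℝ)) :
    (S.card : ℝ) * t ≤ ((Finset.univ.filter (fun p : V × V => D p.1 p.2 = true)).card : ℝ) :=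
  calc (S.card : ℝ) * t
    _ ≤ ∑ v ∈ S, (outdeg D v : ℝ) := by
        simpa only [nsmul_eq_mul] using S.card_nsmul_le_sum _ t hS
    _ ≤ ∑ v, (outdeg D v : ℝ) :=
        Finset.sum_le_univ_sum_of_nonneg fun v => Nat.cast_nonneg (outdeg D v)
    _ = ((Finset.univ.filter (fun p : V × V => D p.1 p.2 = true)).card : ℝ) :=
        mod_cast sum_outdeg_eq_card_edges D

theorem two_mul_sub_one_le_outdeg_of_mem_Er
    (hprop : ∀ u v, D u v = true →
      ((outdeg D u : ℝ) < 2 * s ∨ 2 * s - 1 ≤ (outdeg D v : ℝ)))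
    {p : V × V} (hp : p ∈ Er D s) {v : V} (hv : p.1 = v ∨ p.2 = v) :
    2 * s - 1 ≤ (outdeg D v : ℝ) := by
  obtain ⟨hedge, htail⟩ := (Finset.mem_filter.mp hp).2
  rcases hv with rfl | rfl
  · linarith
  · exact (hprop _ _ hedge).resolve_left htail.not_gt

end Digraph

theorem stmt_13_general (V : Type) [Fintype V] [DecidableEq V]
    (s : ℝ) (hs : 1 / 2 < s)
    (D : V → V → Bool)
    (hm : ((Finset.univ.filter (fun p : V × V => D p.1 p.2 = true)).card : ℝ)
        ≤ s * (Fintype.card V : ℝ))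
    (hprop : ∀ u v, D u v = true →
      ((outdeg D u : ℝ) < 2 * s ∨ 2 * s - 1 ≤ (outdeg D v : ℝ))) :
    ((Finset.univ.filter (fun v : V =>
        ∃ p ∈ Er D s, p.1 = v ∨ p.2 = v)).card : ℝ)
      ≤ (Fintype.card V : ℝ) / (2 - 1 / s) := by
  set S := Finset.univ.filter (fun v : V => ∃ p ∈ Er D s, p.1 = v ∨ p.2 = v)
  have outdeg_ge : ∀ v ∈ S, 2 * s - 1 ≤ (outdeg D v : ℝ) := by
    intro v hv
    obtain ⟨p, hp, hpv⟩ := (Finset.mem_filter.mp hv).2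
    exact two_mul_sub_one_le_outdeg_of_mem_Er hprop hp hpv
  have card_mul_le : (S.card : ℝ) * (2 * s - 1) ≤ s * (Fintype.card V : ℝ) :=
    (card_mul_le_card_edges_of_le_outdeg outdeg_ge).trans hm
  have s_pos : 0 < s := by linarith
  have denom_eq : 2 - 1 / s = (2 * s - 1) / s := by
    rw [sub_div, mul_div_cancel_right₀ 2 s_pos.ne']
  rw [denom_eq, div_div_eq_mul_div, le_div_iff₀ (by linarith), mul_comm (Fintype.card V : ℝ)]
  exact card_mul_le

theorem stmt_13 (V : Type) [Fintype V] [DecidableEq V]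
    (s : ℝ) (hs : 1 < s)
    (D : V → V → Bool)
    -- `D` is an orientation of a simple graph: no pair is oriented both ways
    (hdisj : ∀ u v, ¬ (D u v = true ∧ D v u = true))
    -- the graph has m ≤ s·n edges (each undirected edge is one directed pair):
    (hm : ((Finset.univ.filter (fun p : V × V => D p.1 p.2 = true)).card : ℝ)
        ≤ s * (Fintype.card V : ℝ))
    -- every directed edge (u,v): outdeg u < 2s or outdeg v ≥ 2s − 1:
    (hprop : ∀ u v, D u v = true →
      ((outdeg D u : ℝ) < 2 * s ∨ 2 * s - 1 ≤ (outdeg D v : ℝ))) :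
    ((Finset.univ.filter (fun v : V =>
        ∃ p ∈ Er D s, p.1 = v ∨ p.2 = v)).card : ℝ)
      ≤ (Fintype.card V : ℝ) / (2 - 1 / s) :=
  stmt_13_general V s (by linarith) D hm hprop
end

section
/- There exist constants ε₀ > 0, c > 0 and C > 0 such that for every sufficiently large integer n and every ε ∈ (0, ε₀) the following holds. Suppose (R, ρ, ske, est) is a randomized sketching scheme of size s bits for n×n real symmetric positive semidefinite matrices A all of whose entries lie in the grid {−1, −1 + 1/n^C, −1 + 2/n^C, ..., 1 − 1/n^C, 1}, such that for every such matrix A, with probability at least 2/3 over the seed r drawn from ρ, simultaneously for all x ∈ ℝⁿ the value est(x, ske(A,r), r) lies in [(1−ε)·xᵀAx, (1+ε)·xᵀAx]. Then s ≥ c·n². -/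
open scoped Classical

/-- The quadratic form `xᵀ A x` of a matrix. -/
noncomputable def qfM {n : ℕ} (A : Matrix (Fin n) (Fin n) ℝ) (x : Fin n → ℝ) : ℝ :=
  ∑ i, ∑ j, x i * A i j * x j

/-!
For `ε < 1`, a `(1 ± ε)`-approximation of a nonnegative form at every vector vanishes exactly where
the form does, so a successful sketch determines the kernel of the matrix. Take the matrices
`(1/n) • FᵀF` with `F = [1 | N]` and `N` an `⌊n/2⌋ × ⌈n/2⌉` matrix of zeros and ones: their entries
are multiples of `1/n` in `[0, 1]`, and the kernel of `F` is `{(-N v, v)}`, which determines `N`.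
A fixed seed can therefore succeed on at most `2 ^ s` of these `2 ^ (⌊n/2⌋ * ⌈n/2⌉)` matrices, and
averaging over the seeds gives `δ * 2 ^ (⌊n/2⌋ * ⌈n/2⌉) ≤ 2 ^ s` for success probability `δ`.
-/

section RelApprox

variable {X : Type*} {ε : ℝ} {q f : X → ℝ}

/-- `f` approximates `q` pointwise within relative error `ε`. For `q` the quadratic form of a matrix
and `f` the estimates computed from its sketch, this is the success event of the scheme. -/
def IsRelApprox (ε : ℝ) (q f : X → ℝ) : Prop :=
  ∀ x, (1 - ε) * q x ≤ f x ∧ f x ≤ (1 + ε) * q x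

theorem IsRelApprox.eq_zero_iff (h : IsRelApprox ε q f) (hε : ε < 1) {x : X} (hx : 0 ≤ q x) :
    f x = 0 ↔ q x = 0 := by
  obtain ⟨hlower, hupper⟩ := h x
  constructor <;> intro h0
  · refine le_antisymm (nonpos_of_mul_nonpos_right ?_ (sub_pos.2 hε)) hx
    rwa [h0] at hlower
  · rw [h0, mul_zero] at hlower hupper
    exact le_antisymm hupper hlower

theorem IsRelApprox.support_eq (h : IsRelApprox ε q f) (hε : ε < 1) (hq : 0 ≤ q) :
    f.support = q.support :=
  Set.ext fun x ↦ (h.eq_zero_iff hε (hq x)).not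

end RelApprox

section Counting

variable {ι R : Type*} [Fintype ι] [Fintype R] {ρ : R → ℝ} {δ : ℝ}

theorem mul_card_le_of_card_filter_le (hρ : ∀ r, 0 ≤ ρ r) (hρ_sum : ∑ r, ρ r = 1)
    {P : ι → R → Prop} (hP : ∀ i, δ ≤ ∑ r with P i r, ρ r) {K : ℕ}
    (hK : ∀ r, Finset.card {i | P i r} ≤ K) :
    δ * Fintype.card ι ≤ K :=
  calc δ * Fintype.card ι = ∑ _i : ι, δ := by simp [mul_comm]
    _ ≤ ∑ i, ∑ r with P i r, ρ r := Finset.sum_le_sum fun i _ ↦ hP i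
    _ = ∑ r, ∑ i with P i r, ρ r := Finset.sum_comm' (by simp)
    _ = ∑ r, Finset.card {i | P i r} * ρ r := by simp
    _ ≤ ∑ r, K * ρ r := by gcongr with r; exacts [hρ r, hK r]
    _ = K := by rw [← Finset.mul_sum, hρ_sum, mul_one]

theorem mul_card_le_card_of_isRelApprox {X B : Type*} [Fintype B] {ε : ℝ} (hε : ε < 1)
    (hρ : ∀ r, 0 ≤ ρ r) (hρ_sum : ∑ r, ρ r = 1) {q : ι → X → ℝ} (hq : ∀ i, 0 ≤ q i)
    (hq_inj : Function.Injective fun i ↦ (q i).support) (enc : ι → R → B) (dec : X → B → R → ℝ)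
    (h : ∀ i, δ ≤ ∑ r with IsRelApprox ε (q i) (dec · (enc i r) r), ρ r) :
    δ * Fintype.card ι ≤ Fintype.card B := by
  refine mul_card_le_of_card_filter_le hρ hρ_sum h fun r ↦ ?_
  refine Finset.card_le_card_of_injOn (enc · r) (by simp) fun i hi j hj hij ↦ hq_inj ?_
  simp only [Finset.coe_filter, Finset.mem_univ, true_and, Set.mem_ofPred_eq] at hi hj hij
  rw [hij] at hi
  exact (hi.support_eq hε (hq i)).symm.trans (hj.support_eq hε (hq j))

end Counting

section NormalizedGram

variable {k : Type*} [Fintype k] {n : ℕ} (F : Matrix k (Fin n) ℝ)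

open Matrix

theorem qfM_eq_dotProduct_mulVec (A : Matrix (Fin n) (Fin n) ℝ) (x : Fin n → ℝ) :
    qfM A x = x ⬝ᵥ A *ᵥ x := by
  simp only [qfM, dotProduct, mulVec, Finset.mul_sum, mul_assoc]

/-- The Gram matrix `(1/n) FᵀF` of the `n` columns of `F`. The factor `1/n` brings its entries into
`[0, 1]` when `F` has zero-one entries and at most `n` rows. -/
noncomputable def normalizedGram : Matrix (Fin n) (Fin n) ℝ :=
  (n : ℝ)⁻¹ • (Fᵀ * F)

theorem normalizedGram_isSymm : (normalizedGram F).IsSymm :=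
  IsSymm.smul (by rw [IsSymm, transpose_mul, transpose_transpose]) _

theorem qfM_normalizedGram (x : Fin n → ℝ) :
    qfM (normalizedGram F) x = (n : ℝ)⁻¹ * (F *ᵥ x ⬝ᵥ F *ᵥ x) := by
  rw [qfM_eq_dotProduct_mulVec, normalizedGram, smul_mulVec, dotProduct_smul, smul_eq_mul,
    ← mulVec_mulVec, dotProduct_mulVec, vecMul_transpose]

theorem qfM_normalizedGram_nonneg : 0 ≤ qfM (normalizedGram F) := fun x ↦ by
  rw [qfM_normalizedGram]
  exact mul_nonneg (by positivity) (Finset.sum_nonneg fun _ _ ↦ mul_self_nonneg _)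

theorem qfM_normalizedGram_eq_zero_iff {x : Fin n → ℝ} :
    qfM (normalizedGram F) x = 0 ↔ F *ᵥ x = 0 := by
  obtain rfl | hn := eq_or_ne n 0
  · simp [qfM, Subsingleton.elim x 0]
  · simp [qfM_normalizedGram, hn]

variable {F} in
theorem exists_normalizedGram_apply_eq (hF : ∀ a i, F a i = 0 ∨ F a i = 1)
    (hk : Fintype.card k ≤ n) (i j : Fin n) :
    ∃ z : ℕ, normalizedGram F i j = -1 + (z : ℝ) / n ∧ z ≤ 2 * n := by
  have hn : (n : ℝ) ≠ 0 := by exact_mod_cast i.pos.ne'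
  let common : Finset k := {a | F a i = 1 ∧ F a j = 1}
  have hdot : (Fᵀ * F) i j = common.card := by
    rw [mul_apply, Finset.natCast_card_filter]
    refine Finset.sum_congr rfl fun a _ ↦ ?_
    rcases hF a i with hi | hi <;> rcases hF a j with hj | hj <;> simp [hi, hj]
  have hcommon : common.card ≤ n := (Finset.card_le_univ _).trans hk
  refine ⟨n + common.card, ?_, by lia⟩
  rw [normalizedGram, Matrix.smul_apply, hdot, smul_eq_mul]
  push_cast
  field_simp
  ring

end NormalizedGram

section IdBlock

open Matrix

theorem eq_of_fromCols_one_mulVec_eq_zero_imp {α k l : Type*} [CommRing α] [Fintype k]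
    [DecidableEq k] [Fintype l] {N N' : Matrix k l α}
    (h : ∀ x, fromCols (1 : Matrix k k α) N *ᵥ x = 0 →
      fromCols (1 : Matrix k k α) N' *ᵥ x = 0) : N = N' := by
  refine mulVec_injective (funext fun v ↦ ?_)
  have hker : fromCols (1 : Matrix k k α) N *ᵥ Sum.elim (-(N *ᵥ v)) v = 0 := by
    rw [fromCols_mulVec_sumElim, one_mulVec, neg_add_cancel]
  have hker' := h _ hker
  rw [fromCols_mulVec_sumElim, one_mulVec] at hker'
  exact neg_add_eq_zero.1 hker'

variable {k l : Type*} [DecidableEq k] {n : ℕ} (e : Fin n ≃ k ⊕ l)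

/-- The block matrix `[1 | N]`, with its columns numbered through `e`. -/
def idBlock (N : Matrix k l ℝ) : Matrix k (Fin n) ℝ :=
  (fromCols 1 N).submatrix id e

theorem idBlock_eq_zero_or_one {N : Matrix k l ℝ} (hN : ∀ a b, N a b = 0 ∨ N a b = 1) (a : k)
    (i : Fin n) : idBlock e N a i = 0 ∨ idBlock e N a i = 1 := by
  rw [idBlock, submatrix_apply]
  cases e i with
  | inl b => rw [fromCols_apply_inl, one_apply]; exact (ite_eq_or_eq _ _ _).symm
  | inr b => exact hN a b

variable [Fintype k]

theorem idBlock_mulVec_comp [Fintype l] (N : Matrix k l ℝ) (y : k ⊕ l → ℝ) :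
    idBlock e N *ᵥ (y ∘ e) = fromCols (1 : Matrix k k ℝ) N *ᵥ y := by
  rw [idBlock, submatrix_mulVec_equiv, Function.comp_assoc, e.self_comp_symm]
  rfl

theorem support_qfM_normalizedGram_idBlock_injective [Finite l] :
    Function.Injective fun N ↦ (qfM (normalizedGram (idBlock e N))).support := by
  cases nonempty_fintype l
  intro N N' hsupp
  refine eq_of_fromCols_one_mulVec_eq_zero_imp fun y hy ↦ ?_
  have hzero := not_iff_not.1 (Set.ext_iff.1 hsupp (y ∘ e))
  rw [qfM_normalizedGram_eq_zero_iff, qfM_normalizedGram_eq_zero_iff, idBlock_mulVec_comp,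
    idBlock_mulVec_comp] at hzero
  exact hzero.1 hy

end IdBlock

theorem stmt_16_general {n s : ℕ} {R : Type*} [Fintype R] {ρ : R → ℝ} (hρ : ∀ r, 0 ≤ ρ r)
    (hρ_sum : ∑ r, ρ r = 1) {ε δ : ℝ} (hε : ε < 1)
    (ske : Matrix (Fin n) (Fin n) ℝ → R → Fin s → Bool)
    (est : (Fin n → ℝ) → (Fin s → Bool) → R → ℝ)
    (h : ∀ A : Matrix (Fin n) (Fin n) ℝ, (∀ i j, A i j = A j i) → (∀ x, 0 ≤ qfM A x) →
      (∀ i j, ∃ z : ℕ, A i j = -1 + (z : ℝ) / n ∧ z ≤ 2 * n) →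
      δ ≤ ∑ r with IsRelApprox ε (qfM A) (est · (ske A r) r), ρ r) :
    δ * 2 ^ (n / 2 * (n - n / 2)) ≤ 2 ^ s := by
  let e : Fin n ≃ Fin (n / 2) ⊕ Fin (n - n / 2) :=
    (finCongr (by lia)).trans finSumFinEquiv.symm
  let toReal (b : Bool) : ℝ := if b then 1 else 0
  have toReal_injective : Function.Injective toReal := by simp [Function.Injective, toReal]
  let A (M : Fin (n / 2) → Fin (n - n / 2) → Bool) :=
    normalizedGram (idBlock e ((Matrix.of M).map toReal))
  have hA_support : Function.Injective fun M ↦ (qfM (A M)).support :=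
    (support_qfM_normalizedGram_idBlock_injective e).comp
      ((Matrix.map_injective toReal_injective).comp Matrix.of.injective)
  have hA_grid (M) : ∀ i j, ∃ z : ℕ, A M i j = -1 + (z : ℝ) / n ∧ z ≤ 2 * n :=
    exists_normalizedGram_apply_eq
      (idBlock_eq_zero_or_one e fun a b ↦ (ite_eq_or_eq (M a b = true) (1 : ℝ) 0).symm)
      (by simpa using Nat.div_le_self n 2)
  have hcount := mul_card_le_card_of_isRelApprox hε hρ hρ_sum
    (fun M ↦ qfM_normalizedGram_nonneg _) hA_support (fun M ↦ ske (A M)) est fun M ↦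
      h (A M) (fun i j ↦ (normalizedGram_isSymm _).apply j i) (qfM_normalizedGram_nonneg _)
        (hA_grid M)
  simpa [pow_mul'] using hcount

theorem le_of_mul_two_pow_le_two_pow {δ : ℝ} (hδ : 1 / 2 < δ) {a s : ℕ}
    (h : δ * 2 ^ a ≤ 2 ^ s) : a ≤ s := by
  have hlt : (2 : ℝ) ^ a < 2 ^ (s + 1) :=
    calc (2 : ℝ) ^ a = 2 * (1 / 2 * 2 ^ a) := by ring
      _ < 2 * (δ * 2 ^ a) := by gcongr
      _ ≤ 2 * 2 ^ s := by gcongr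
      _ = 2 ^ (s + 1) := (pow_succ' 2 s).symm
  exact Nat.lt_succ_iff.1 ((pow_lt_pow_iff_right₀ one_lt_two).1 hlt)

theorem sq_le_eight_mul_half_mul_sub_half {n : ℕ} (hn : 2 ≤ n) :
    n ^ 2 ≤ 8 * (n / 2 * (n - n / 2)) := by
  obtain ⟨q, rfl | rfl⟩ := n.even_or_odd'
  · rw [show 2 * q / 2 = q by lia, show 2 * q - q = q by lia]
    nlinarith
  · rw [show (2 * q + 1) / 2 = q by lia, show 2 * q + 1 - q = q + 1 by lia]
    nlinarith

theorem sq_div_eight_le_of_mul_two_pow_le {n s : ℕ} (hn : 2 ≤ n) {δ : ℝ} (hδ : 1 / 2 < δ)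
    (h : δ * 2 ^ (n / 2 * (n - n / 2)) ≤ 2 ^ s) : 1 / 8 * (n : ℝ) ^ 2 ≤ s := by
  have hnat : n ^ 2 ≤ 8 * s :=
    (sq_le_eight_mul_half_mul_sub_half hn).trans
      (Nat.mul_le_mul_left 8 (le_of_mul_two_pow_le_two_pow hδ h))
  have hreal : (n : ℝ) ^ 2 ≤ 8 * s := by exact_mod_cast hnat
  linarith

theorem stmt_16 :
    ∃ ε₀ c C : ℝ, 0 < ε₀ ∧ 0 < c ∧ 0 < C ∧
      ∃ n₀ : ℕ, ∀ n : ℕ, n₀ ≤ n → ∀ ε : ℝ, 0 < ε → ε < ε₀ →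
      ∀ (s : ℕ) (R : Type) [Fintype R] (ρ : R → ℝ),
        (∀ r, 0 ≤ ρ r) → (∑ r : R, ρ r) = 1 →
        ∀ (ske : Matrix (Fin n) (Fin n) ℝ → R → (Fin s → Bool))
          (est : (Fin n → ℝ) → (Fin s → Bool) → R → ℝ),
          (∀ A : Matrix (Fin n) (Fin n) ℝ,
            (∀ i j, A i j = A j i) →
            (∀ x : Fin n → ℝ, 0 ≤ qfM A x) →
            (∀ i j, ∃ z : ℕ, A i j = -1 + (z : ℝ) / (n : ℝ) ^ C ∧
              (z : ℝ) ≤ 2 * (n : ℝ) ^ C) →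
            (2 : ℝ) / 3 ≤
              ∑ r ∈ Finset.univ.filter (fun r : R =>
                ∀ x : Fin n → ℝ,
                  (1 - ε) * qfM A x ≤ est x (ske A r) r ∧
                    est x (ske A r) r ≤ (1 + ε) * qfM A x), ρ r) →
          c * (n : ℝ) ^ 2 ≤ (s : ℝ) := by
  refine ⟨1, 1 / 8, 1, one_pos, by norm_num, one_pos, 2, ?_⟩
  simp only [Real.rpow_one]
  exact fun n hn ε _ hε s R _ ρ hρ hρ_sum ske est h ↦
    sq_div_eight_le_of_mul_two_pow_le hn (δ := 2 / 3) (by norm_num) <|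
      stmt_16_general hρ hρ_sum hε ske est fun A hA_symm hA_nonneg hA_grid ↦
        h A hA_symm hA_nonneg (mod_cast hA_grid)
end
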